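/- Let P : ℝ² → ℝ be real analytic in a neighborhood of the origin, not identically zero near the origin, with Taylor coefficients c_{p,q} := ∂_x^p ∂_y^q P(0,0)/(p! q!). Let m ∈ ℕ with m ≥ 1, set e := min{ p + m q : (p,q) ∈ ℕ², c_{p,q} ≠ 0 }, and define the polynomial φ(r) := Σ_{(p,q) : c_{p,q} ≠ 0, p + m q = e} c_{p,q} r^q. Let r₀ be a nonzero real root of φ of multiplicity s ≥ 1 (i.e. φ(r₀) = φ'(r₀) = ⋯ = φ^{(s−1)}(r₀) = 0 and φ^{(s)}(r₀) ≠ 0). Define P₁(x,y) := P(x, (r₀ + y) x^m), which is real analytic near the origin, and let c'_{p,q} denote its Taylor coefficients at the origin. Then: (i) c'_{p,q} = 0 whenever p < e; (ii) c'_{e,q} = 0 for all q < s; and (iii) c'_{e,s} ≠ 0. (Equivalently, the leftmost vertex of the Newton polyhedron of P₁ is (e, s).) -/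

import Mathlib

open MeasureTheory

noncomputable section

/-- Partial derivative in the first variable. -/
def pdx (f : ℝ × ℝ → ℝ) : ℝ × ℝ → ℝ := fun p => deriv (fun t => f (t, p.2)) p.1

/-- Partial derivative in the second variable. -/
def pdy (f : ℝ × ℝ → ℝ) : ℝ × ℝ → ℝ := fun p => deriv (fun t => f (p.1, t)) p.2

/-- Taylor coefficient `c_{p,q} = ∂ₓ^p ∂_y^q P(0,0) / (p! q!)`. -/
def taylorCoef (P : ℝ × ℝ → ℝ) (p q : ℕ) : ℝ :=
  (pdx^[p] (pdy^[q] P)) (0, 0) / ((Nat.factorial p : ℝ) * (Nat.factorial q : ℝ))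

/-- The substitution `P₁(x,y) = P(x, (r₀ + y) x^m)` used in the resolution
algorithm. -/
def substRoot (P : ℝ × ℝ → ℝ) (r₀ : ℝ) (m : ℕ) : ℝ × ℝ → ℝ :=
  fun p => P (p.1, (r₀ + p.2) * p.1 ^ m)

open Topology Filter

lemma pdx_eq (F : ℝ × ℝ → ℝ) (z : ℝ × ℝ) (h : DifferentiableAt ℝ F z) :
    pdx F z = fderiv ℝ F z (1, 0) := by
  have h1 : HasDerivAt (fun t : ℝ => (t, z.2)) ((1 : ℝ), (0 : ℝ)) z.1 :=
    (hasDerivAt_id z.1).prodMk (hasDerivAt_const z.1 z.2)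
  exact (HasFDerivAt.comp_hasDerivAt (f := fun t : ℝ => (t, z.2)) z.1 h.hasFDerivAt h1).deriv

lemma pdy_eq (F : ℝ × ℝ → ℝ) (z : ℝ × ℝ) (h : DifferentiableAt ℝ F z) :
    pdy F z = fderiv ℝ F z (0, 1) := by
  have h1 : HasDerivAt (fun t : ℝ => (z.1, t)) ((0 : ℝ), (1 : ℝ)) z.2 :=
    (hasDerivAt_const z.2 z.1).prodMk (hasDerivAt_id z.2)
  exact (HasFDerivAt.comp_hasDerivAt (f := fun t : ℝ => (z.1, t)) z.2 h.hasFDerivAt h1).deriv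

lemma pdx_ev {F : ℝ × ℝ → ℝ} {z : ℝ × ℝ} (h : AnalyticAt ℝ F z) :
    pdx F =ᶠ[𝓝 z] fun w => fderiv ℝ F w (1, 0) := by
  filter_upwards [h.eventually_analyticAt] with w hw using pdx_eq F w hw.differentiableAt

lemma pdy_ev {F : ℝ × ℝ → ℝ} {z : ℝ × ℝ} (h : AnalyticAt ℝ F z) :
    pdy F =ᶠ[𝓝 z] fun w => fderiv ℝ F w (0, 1) := by
  filter_upwards [h.eventually_analyticAt] with w hw using pdy_eq F w hw.differentiableAt

lemma fd_an {F : ℝ × ℝ → ℝ} {z : ℝ × ℝ} (h : AnalyticAt ℝ F z) (v : ℝ × ℝ) :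
    AnalyticAt ℝ (fun w => fderiv ℝ F w v) z :=
  ((ContinuousLinearMap.apply ℝ ℝ v).analyticAt _).comp h.fderiv

lemma pdx_an {F : ℝ × ℝ → ℝ} {z : ℝ × ℝ} (h : AnalyticAt ℝ F z) : AnalyticAt ℝ (pdx F) z :=
  (fd_an h _).congr (pdx_ev h).symm

lemma pdy_an {F : ℝ × ℝ → ℝ} {z : ℝ × ℝ} (h : AnalyticAt ℝ F z) : AnalyticAt ℝ (pdy F) z :=
  (fd_an h _).congr (pdy_ev h).symm

lemma pdxn_an {F : ℝ × ℝ → ℝ} {z : ℝ × ℝ} (h : AnalyticAt ℝ F z) (n : ℕ) :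
    AnalyticAt ℝ (pdx^[n] F) z := by
  induction n with
  | zero => simpa
  | succ n ih => rw [Function.iterate_succ_apply']; exact pdx_an ih

lemma pdyn_an {F : ℝ × ℝ → ℝ} {z : ℝ × ℝ} (h : AnalyticAt ℝ F z) (n : ℕ) :
    AnalyticAt ℝ (pdy^[n] F) z := by
  induction n with
  | zero => simpa
  | succ n ih => rw [Function.iterate_succ_apply']; exact pdy_an ih

lemma pdx_congr {F G : ℝ × ℝ → ℝ} {z : ℝ × ℝ} (h : F =ᶠ[𝓝 z] G) : pdx F =ᶠ[𝓝 z] pdx G := by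
  filter_upwards [h.eventuallyEq_nhds] with w hw
  have hc : Tendsto (fun t : ℝ => (t, w.2)) (𝓝 w.1) (𝓝 w) :=
    (Continuous.prodMk continuous_id continuous_const).tendsto' w.1 w rfl
  exact Filter.EventuallyEq.deriv_eq (hc.eventually hw)

lemma pdy_congr {F G : ℝ × ℝ → ℝ} {z : ℝ × ℝ} (h : F =ᶠ[𝓝 z] G) : pdy F =ᶠ[𝓝 z] pdy G := by
  filter_upwards [h.eventuallyEq_nhds] with w hw
  have hc : Tendsto (fun t : ℝ => (w.1, t)) (𝓝 w.2) (𝓝 w) :=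
    (Continuous.prodMk continuous_const continuous_id).tendsto' w.2 w rfl
  exact Filter.EventuallyEq.deriv_eq (hc.eventually hw)

lemma pdxn_congr {F G : ℝ × ℝ → ℝ} {z : ℝ × ℝ} (h : F =ᶠ[𝓝 z] G) (n : ℕ) :
    pdx^[n] F =ᶠ[𝓝 z] pdx^[n] G := by
  induction n with
  | zero => simpa
  | succ n ih => simp only [Function.iterate_succ_apply']; exact pdx_congr ih

lemma pdyn_congr {F G : ℝ × ℝ → ℝ} {z : ℝ × ℝ} (h : F =ᶠ[𝓝 z] G) (n : ℕ) :
    pdy^[n] F =ᶠ[𝓝 z] pdy^[n] G := by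
  induction n with
  | zero => simpa
  | succ n ih => simp only [Function.iterate_succ_apply']; exact pdy_congr ih

lemma fd_fd {F : ℝ × ℝ → ℝ} {z : ℝ × ℝ} (h : AnalyticAt ℝ F z) (v w : ℝ × ℝ) :
    fderiv ℝ (fun u => fderiv ℝ F u v) z w = fderiv ℝ (fderiv ℝ F) z w v := by
  rw [fderiv_clm_apply h.fderiv.differentiableAt (by fun_prop)]
  simp

lemma pd_comm {F : ℝ × ℝ → ℝ} {z : ℝ × ℝ} (h : AnalyticAt ℝ F z) :
    pdx (pdy F) =ᶠ[𝓝 z] pdy (pdx F) := by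
  have h1 := (pdx_congr (pdy_ev h)).trans (pdx_ev (fd_an h (0, 1)))
  have h2 := (pdy_congr (pdx_ev h)).trans (pdy_ev (fd_an h (1, 0)))
  refine h1.trans (EventuallyEq.trans ?_ h2.symm)
  filter_upwards [h.eventually_analyticAt] with w hw
  rw [fd_fd hw, fd_fd hw]
  exact (ContDiffAt.isSymmSndFDerivAt (n := 2) hw.contDiffAt (by simp)) _ _

lemma pd_comm_n {F : ℝ × ℝ → ℝ} {z : ℝ × ℝ} (h : AnalyticAt ℝ F z) (q : ℕ) :
    pdx (pdy^[q] F) =ᶠ[𝓝 z] pdy^[q] (pdx F) := by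
  induction q with
  | zero => simp
  | succ n ih =>
    simp only [Function.iterate_succ_apply']
    exact (pd_comm (pdyn_an h n)).trans (pdy_congr ih)

lemma pd_comm_nn {F : ℝ × ℝ → ℝ} {z : ℝ × ℝ} (h : AnalyticAt ℝ F z) (p q : ℕ) :
    pdx^[p] (pdy^[q] F) =ᶠ[𝓝 z] pdy^[q] (pdx^[p] F) := by
  induction p with
  | zero => simp
  | succ n ih =>
    simp only [Function.iterate_succ_apply']
    exact (pdx_congr ih).trans (pd_comm_n (pdxn_an h n) q)

lemma pdxn_iter (F : ℝ × ℝ → ℝ) (n : ℕ) (z : ℝ × ℝ) :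
    pdx^[n] F z = iteratedDeriv n (fun t => F (t, z.2)) z.1 := by
  induction n generalizing z with
  | zero => simp
  | succ n ih =>
    rw [Function.iterate_succ_apply', iteratedDeriv_succ]
    simp only [pdx, ih]

lemma pdyn_iter (F : ℝ × ℝ → ℝ) (n : ℕ) (z : ℝ × ℝ) :
    pdy^[n] F z = iteratedDeriv n (fun t => F (z.1, t)) z.2 := by
  induction n generalizing z with
  | zero => simp
  | succ n ih =>
    rw [Function.iterate_succ_apply', iteratedDeriv_succ]
    simp only [pdy, ih]

lemma tc_pdx {F : ℝ × ℝ → ℝ} (h : AnalyticAt ℝ F (0, 0)) (p q : ℕ)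
    (h0 : taylorCoef F (p + 1) q = 0) : taylorCoef (pdx F) p q = 0 := by
  have hf : (((p + 1).factorial : ℝ) * (q.factorial : ℝ)) ≠ 0 := by positivity
  rw [taylorCoef, div_eq_zero_iff, or_iff_left hf, Function.iterate_succ_apply] at h0
  rw [taylorCoef, ← (pdxn_congr (pd_comm_n h q) p).eq_of_nhds, h0, zero_div]

lemma tc_pdy {F : ℝ × ℝ → ℝ} (p q : ℕ)
    (h0 : taylorCoef F p (q + 1) = 0) : taylorCoef (pdy F) p q = 0 := by
  have hf : ((p.factorial : ℝ) * ((q + 1).factorial : ℝ)) ≠ 0 := by positivity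
  rw [taylorCoef, div_eq_zero_iff, or_iff_left hf, Function.iterate_succ_apply] at h0
  rw [taylorCoef, h0, zero_div]

lemma curve_an {F : ℝ × ℝ → ℝ} (h : AnalyticAt ℝ F (0, 0)) (m : ℕ) (hm : 1 ≤ m) (r : ℝ) :
    AnalyticAt ℝ (fun x : ℝ => F (x, r * x ^ m)) 0 := by
  have h0 : ((0 : ℝ), r * (0 : ℝ) ^ m) = (0, 0) := by simp [show m ≠ 0 by omega]
  have hc : AnalyticAt ℝ (fun x : ℝ => (x, r * x ^ m)) 0 := by fun_prop
  exact AnalyticAt.fun_comp (g := F) (by rw [h0]; exact h) hc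

lemma order_curve (m : ℕ) (hm : 1 ≤ m) (r : ℝ) (N : ℕ) :
    ∀ F : ℝ × ℝ → ℝ, AnalyticAt ℝ F (0, 0) →
      (∀ p q, p + m * q < N → taylorCoef F p q = 0) →
      (N : ℕ∞) ≤ analyticOrderAt (fun x : ℝ => F (x, r * x ^ m)) 0 := by
  induction N using Nat.strong_induction_on with
  | _ N ih =>
  intro F hF hc
  rcases N with _ | N
  · simp
  have hm0 : m ≠ 0 := by omega
  have hF0 : F (0, r * 0 ^ m) = 0 := by
    have := hc 0 0 (by simp)
    simpa [taylorCoef, hm0] using this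
  have hx := ih N (by omega) (pdx F) (pdx_an hF) (fun p q hpq =>
    tc_pdx hF p q (hc _ _ (by omega)))
  have hy := ih (N + 1 - m) (by omega) (pdy F) (pdy_an hF) (fun p q hpq =>
    tc_pdy p q (hc _ _ (by rw [mul_add]; omega)))
  have hA := curve_an hF m hm r
  have hAx := curve_an (pdx_an hF) m hm r
  have hAy := curve_an (pdy_an hF) m hm r
  have hd : deriv (fun x : ℝ => F (x, r * x ^ m)) =ᶠ[𝓝 0]
      (fun x : ℝ => pdx F (x, r * x ^ m)) +
      ((fun x : ℝ => r * m) * ((fun x : ℝ => x) ^ (m - 1) * fun x : ℝ => pdy F (x, r * x ^ m))) := by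
    have hT : Tendsto (fun x : ℝ => (x, r * x ^ m)) (𝓝 0) (𝓝 (0, 0)) :=
      (by fun_prop : Continuous (fun x : ℝ => (x, r * x ^ m))).tendsto' _ _ (by simp [hm0])
    filter_upwards [hT.eventually hF.eventually_analyticAt] with x hx
    have h1 : HasDerivAt (fun x : ℝ => (x, r * x ^ m)) ((1 : ℝ), r * (m * x ^ (m - 1))) x :=
      (hasDerivAt_id x).prodMk ((hasDerivAt_pow m x).const_mul r)
    have h2 := (HasFDerivAt.comp_hasDerivAt (f := fun x : ℝ => (x, r * x ^ m)) x
      hx.differentiableAt.hasFDerivAt h1).deriv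
    simp only [Pi.add_apply, Pi.mul_apply, Pi.pow_apply]
    rw [pdx_eq _ _ hx.differentiableAt, pdy_eq _ _ hx.differentiableAt]
    refine h2.trans ?_
    have : ((1 : ℝ), r * (m * x ^ (m - 1))) = (1, 0) + (r * (m * x ^ (m - 1))) • ((0 : ℝ), (1 : ℝ)) := by
      simp
    rw [this, map_add, map_smul, smul_eq_mul]
    ring
  have hod : (N : ℕ∞) ≤ analyticOrderAt (deriv (fun x : ℝ => F (x, r * x ^ m))) 0 := by
    rw [analyticOrderAt_congr hd]
    refine le_trans (le_min hx ?_) le_analyticOrderAt_add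
    rw [analyticOrderAt_mul (by fun_prop) (AnalyticAt.mul (by fun_prop) hAy),
      analyticOrderAt_mul (by fun_prop) hAy, analyticOrderAt_pow (by fun_prop)]
    have h1 : analyticOrderAt (fun x : ℝ => x) 0 = 1 := analyticOrderAt_id
    rw [h1]
    refine le_trans ?_ le_add_self
    refine le_trans ?_ (add_le_add le_rfl hy)
    rw [nsmul_one]
    norm_cast
    omega
  have h3 := hA.analyticOrderAt_deriv_add_one
  simp only [hF0, sub_zero] at h3
  rw [← h3]
  push_cast
  exact add_le_add hod le_rfl

lemma tc_iter (F : ℝ × ℝ → ℝ) (p q : ℕ) : taylorCoef F p q =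
    iteratedDeriv p (fun x => iteratedDeriv q (fun y => F (x, y)) 0) 0 /
      ((p.factorial : ℝ) * (q.factorial : ℝ)) := by
  rw [taylorCoef, pdxn_iter]
  simp only [pdyn_iter]

lemma tc_sub {F G : ℝ × ℝ → ℝ} (hF : AnalyticAt ℝ F (0, 0)) (hG : AnalyticAt ℝ G (0, 0)) (p q : ℕ) :
    taylorCoef (fun z => F z - G z) p q = taylorCoef F p q - taylorCoef G p q := by
  have hT : Tendsto (fun x : ℝ => (x, (0 : ℝ))) (𝓝 0) (𝓝 (0, 0)) :=
    (by fun_prop : Continuous (fun x : ℝ => (x, (0 : ℝ)))).tendsto' _ _ rfl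
  have key : ∀ H : ℝ × ℝ → ℝ, AnalyticAt ℝ H (0, 0) →
      AnalyticAt ℝ (fun x => iteratedDeriv q (fun y => H (x, y)) 0) 0 := by
    intro H hH
    have : (fun x => iteratedDeriv q (fun y => H (x, y)) 0) = fun x => (pdy^[q] H) (x, 0) := by
      funext x; rw [pdyn_iter]
    rw [this]
    exact AnalyticAt.fun_comp (g := pdy^[q] H) (f := fun x : ℝ => (x, (0 : ℝ)))
      (pdyn_an hH q) (by fun_prop)
  have hev : (fun x => iteratedDeriv q (fun y => F (x, y) - G (x, y)) 0) =ᶠ[𝓝 0]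
      fun x => iteratedDeriv q (fun y => F (x, y)) 0 - iteratedDeriv q (fun y => G (x, y)) 0 := by
    filter_upwards [hT.eventually hF.eventually_analyticAt,
      hT.eventually hG.eventually_analyticAt] with x h1 h2
    refine iteratedDeriv_fun_sub ?_ ?_
    · exact (AnalyticAt.fun_comp (g := F) (f := fun y : ℝ => (x, y)) h1 (by fun_prop)).contDiffAt
    · exact (AnalyticAt.fun_comp (g := G) (f := fun y : ℝ => (x, y)) h2 (by fun_prop)).contDiffAt
  rw [tc_iter, tc_iter, tc_iter, ← sub_div, hev.iteratedDeriv_eq,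
    iteratedDeriv_fun_sub (key F hF).contDiffAt (key G hG).contDiffAt]

lemma pow_iter_zero (n m : ℕ) :
    iteratedDeriv n (fun x : ℝ => x ^ m) 0 = if n = m then (n.factorial : ℝ) else 0 := by
  rw [iteratedDeriv_fun_pow_zero]
  split_ifs with h <;> simp [h]

lemma tc_poly (E : Finset (ℕ × ℕ)) (c : ℕ × ℕ → ℝ) (p q : ℕ) :
    taylorCoef (fun z => ∑ i ∈ E, c i * z.1 ^ i.1 * z.2 ^ i.2) p q =
      if (p, q) ∈ E then c (p, q) else 0 := by
  have h1 : ∀ x : ℝ, iteratedDeriv q (fun y : ℝ => ∑ i ∈ E, c i * x ^ i.1 * y ^ i.2) 0 =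
      ∑ i ∈ E, (c i * (if q = i.2 then (q.factorial : ℝ) else 0)) * x ^ i.1 := by
    intro x
    rw [iteratedDeriv_fun_sum (fun i _ => by fun_prop)]
    refine Finset.sum_congr rfl fun i _ => ?_
    rw [iteratedDeriv_const_mul_field, pow_iter_zero]
    ring
  rw [tc_iter]
  simp only [h1]
  rw [iteratedDeriv_fun_sum (fun i _ => by fun_prop)]
  simp only [iteratedDeriv_const_mul_field, pow_iter_zero]
  have hf : ((p.factorial : ℝ) * (q.factorial : ℝ)) ≠ 0 := by positivity
  rw [div_eq_iff hf]
  have : ∀ i ∈ E, c i * (if q = i.2 then (q.factorial : ℝ) else 0) *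
      (if p = i.1 then (p.factorial : ℝ) else 0) =
      if (p, q) = i then c (p, q) * ((p.factorial : ℝ) * (q.factorial : ℝ)) else 0 := by
    rintro ⟨a, b⟩ _
    by_cases h1 : p = a <;> by_cases h2 : q = b <;> simp [h1, h2]
    ring
  rw [Finset.sum_congr rfl this, Finset.sum_ite_eq]
  split_ifs <;> simp

/-- Vertex tracking formula: after the change of variables
`(x,y) ↦ (x, (r₀ + y) x^m)` along a root `r₀` of multiplicity `s` of the edge
polynomial of the edge of slope `−1/m`, the leftmost vertex of the Newton
polyhedron of the transformed function is `(e, s)`. -/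
theorem vertex_tracking
    (P : ℝ × ℝ → ℝ) (hP : AnalyticAt ℝ P (0, 0))
    (hPnz : ∀ ε > (0 : ℝ), ∃ p : ℝ × ℝ, ‖p‖ < ε ∧ P p ≠ 0)
    (m : ℕ) (hm : 1 ≤ m) (e : ℕ)
    (he₁ : ∃ p q : ℕ, taylorCoef P p q ≠ 0 ∧ p + m * q = e)
    (he₂ : ∀ p q : ℕ, taylorCoef P p q ≠ 0 → e ≤ p + m * q)
    (E : Finset (ℕ × ℕ))
    (hE : ∀ pq : ℕ × ℕ, pq ∈ E ↔ taylorCoef P pq.1 pq.2 ≠ 0 ∧ pq.1 + m * pq.2 = e)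
    (r₀ : ℝ) (hr₀ : r₀ ≠ 0) (s : ℕ) (hs : 1 ≤ s)
    (hroot : ∀ k : ℕ, k < s →
      iteratedDeriv k (fun r : ℝ => ∑ pq ∈ E, taylorCoef P pq.1 pq.2 * r ^ pq.2) r₀ = 0)
    (hroot' :
      iteratedDeriv s (fun r : ℝ => ∑ pq ∈ E, taylorCoef P pq.1 pq.2 * r ^ pq.2) r₀ ≠ 0) :
    (∀ p q : ℕ, p < e → taylorCoef (substRoot P r₀ m) p q = 0) ∧
    (∀ q : ℕ, q < s → taylorCoef (substRoot P r₀ m) e q = 0) ∧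
    taylorCoef (substRoot P r₀ m) e s ≠ 0 := by
  have hm0 : m ≠ 0 := by omega
  set φ : ℝ → ℝ := fun r : ℝ => ∑ pq ∈ E, taylorCoef P pq.1 pq.2 * r ^ pq.2 with hφ
  let G : ℝ × ℝ → ℝ := fun z => ∑ i ∈ E, taylorCoef P i.1 i.2 * z.1 ^ i.1 * z.2 ^ i.2
  have hG : AnalyticAt ℝ G (0, 0) := by
    refine Finset.analyticAt_fun_sum _ fun i _ => ?_
    exact (analyticAt_const.mul (analyticAt_fst.pow _)).mul (analyticAt_snd.pow _)
  have hR : AnalyticAt ℝ (fun z => P z - G z) (0, 0) := hP.sub hG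
  have hRc : ∀ p q, p + m * q < e + 1 → taylorCoef (fun z => P z - G z) p q = 0 := by
    intro p q hpq
    rw [tc_sub hP hG, tc_poly E (fun i => taylorCoef P i.1 i.2) p q]
    split_ifs with h
    · simp
    · by_contra hne
      rw [sub_zero] at hne
      exact h ((hE (p, q)).2 ⟨hne, le_antisymm (Nat.lt_succ_iff.1 hpq) (he₂ p q hne)⟩)
  have hcurve : ∀ r : ℝ, ∀ k ≤ e, iteratedDeriv k (fun x : ℝ => P (x, r * x ^ m)) 0 =
      φ r * (if k = e then (k.factorial : ℝ) else 0) := by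
    intro r k hk
    have h1 := (natCast_le_analyticOrderAt_iff_iteratedDeriv_eq_zero
      (curve_an hR m hm r)).1 (order_curve m hm r (e + 1) _ hR hRc) k (by omega)
    have h2 : (fun x : ℝ => G (x, r * x ^ m)) = fun x => φ r * x ^ e := by
      funext x
      simp only [G, hφ, Finset.sum_mul]
      refine Finset.sum_congr rfl fun i hi => ?_
      rw [← ((hE i).1 hi).2, mul_pow, ← pow_mul, pow_add]
      ring
    rw [iteratedDeriv_fun_sub (curve_an hP m hm r).contDiffAt (curve_an hG m hm r).contDiffAt,
      h2, iteratedDeriv_const_mul_field, pow_iter_zero] at h1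
    linarith
  have hS : AnalyticAt ℝ (substRoot P r₀ m) (0, 0) := by
    have h0 : ((0 : ℝ), (r₀ + 0) * (0 : ℝ) ^ m) = (0, 0) := by simp [hm0]
    have hc : AnalyticAt ℝ (fun z : ℝ × ℝ => (z.1, (r₀ + z.2) * z.1 ^ m)) (0, 0) := by
      exact analyticAt_fst.prod ((analyticAt_const.add analyticAt_snd).mul (analyticAt_fst.pow _))
    exact AnalyticAt.fun_comp (g := P) (by simpa [hm0] using hP) hc
  have key : ∀ p q, p ≤ e → taylorCoef (substRoot P r₀ m) p q =
      ((if p = e then (p.factorial : ℝ) else 0) * iteratedDeriv q φ r₀) /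
        ((p.factorial : ℝ) * (q.factorial : ℝ)) := by
    intro p q hp
    rw [taylorCoef, (pd_comm_nn hS p q).eq_of_nhds, pdyn_iter]
    have h3 : (fun t : ℝ => (pdx^[p] (substRoot P r₀ m)) (((0 : ℝ), (0 : ℝ)).1, t)) =
        fun t => (if p = e then (p.factorial : ℝ) else 0) * φ (r₀ + t) := by
      funext t
      rw [pdxn_iter]
      simp only [substRoot]
      rw [hcurve (r₀ + t) p hp, mul_comm]
    rw [h3, iteratedDeriv_const_mul_field, iteratedDeriv_comp_const_add]
    simp
  refine ⟨fun p q hp => ?_, fun q hq => ?_, ?_⟩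
  · rw [key p q hp.le, if_neg hp.ne]
    simp
  · rw [key e q le_rfl, hroot q hq]
    simp
  · rw [key e s le_rfl, if_pos rfl]
    have : (e.factorial : ℝ) ≠ 0 := by positivity
    have : (s.factorial : ℝ) ≠ 0 := by positivity
    positivity
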